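/- (Common and specific sources of variability.) For k = 1,…,n let Λ_k be a nonempty set, (S_k, 𝔖_k) a measurable space, Φ ⊆ Λ₁ × ⋯ × Λₙ nonempty, and (μ_φ)_{φ∈Φ} a family of probability measures on S₁ × ⋯ × Sₙ. Then (μ_φ)_{φ∈Φ} satisfies selective influences if and only if there exist probability spaces (Ω₀, 𝔉₀, P₀), (Ω₁, 𝔉₁, P₁), …, (Ωₙ, 𝔉ₙ, Pₙ) and functions w_k : Λ_k × Ω₀ × Ω_k → S_k, with w_k(λ, ·, ·) jointly measurable for every λ ∈ Λ_k, such that for every φ = (λ₁,…,λₙ) ∈ Φ the pushforward of the product measure P₀ ⊗ P₁ ⊗ ⋯ ⊗ Pₙ on Ω₀ × Ω₁ × ⋯ × Ωₙ under (ω₀, ω₁,…, ωₙ) ↦ (w₁(λ₁, ω₀, ω₁),…, wₙ(λₙ, ω₀, ωₙ)) equals μ_φ. (Ω₀ plays the role of a common source of variability and Ω₁,…,Ωₙ of stochastically independent sources specific to the respective outputs.) -/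

import Mathlib

open MeasureTheory

universe u v

/-!
A source shared by all outputs can serve as the common one, the specific sources being trivial.
Conversely, the common source and all the specific ones together form a single shared source, from
which the `k`-th output reads off the common component and its own specific component.
-/

universe w t

section

variable {ι : Type t} {Λ : ι → Type*} {S : ι → Type*} [∀ k, MeasurableSpace (S k)]

/-- Selective influences: at every allowable treatment `φ ∈ Φ`, the distribution `μ φ` is the joint
law of outputs of which the `k`-th is a function of its own input `φ k` and of a source of
randomness `Ω` shared by all outputs and all treatments. Values of `μ` outside `Φ` play no role. -/
def SelectiveInfluences (Φ : Set (∀ k, Λ k)) (μ : (∀ k, Λ k) → Measure (∀ k, S k)) : Prop :=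
  ∃ (Ω : Type w) (_ : MeasurableSpace Ω) (P : Measure Ω),
    IsProbabilityMeasure P ∧
    ∃ f : ∀ k, Λ k → Ω → S k,
      (∀ k l, Measurable (f k l)) ∧
      ∀ φ ∈ Φ, P.map (fun ω k => f k (φ k) ω) = μ φ

/-- Common and specific sources of variability: the `k`-th output is a function of its own input, of
a common source `Ω₀` and of a specific source `Ωs k`. Independence of the sources is encoded by
their product measure; `Measure.infinitePi` is zero unless all factors are probability measures. -/
def HasCommonAndSpecificSources (Φ : Set (∀ k, Λ k))
    (μ : (∀ k, Λ k) → Measure (∀ k, S k)) : Prop :=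
  ∃ (Ω₀ : Type w) (_ : MeasurableSpace Ω₀) (P₀ : Measure Ω₀),
    IsProbabilityMeasure P₀ ∧
    ∃ (Ωs : ι → Type w) (_ : ∀ k, MeasurableSpace (Ωs k)) (Ps : ∀ k, Measure (Ωs k))
      (_ : ∀ k, IsProbabilityMeasure (Ps k)),
      ∃ w : ∀ k, Λ k → Ω₀ × Ωs k → S k,
        (∀ k l, Measurable (w k l)) ∧
        ∀ φ ∈ Φ, (P₀.prod (Measure.infinitePi Ps)).map
          (fun q k => w k (φ k) (q.1, q.2 k)) = μ φ

theorem map_comp_fst_prod {α β γ : Type*} [MeasurableSpace α] [MeasurableSpace β]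
    [MeasurableSpace γ] (P : Measure α) (Q : Measure β) [IsProbabilityMeasure Q]
    {g : α → γ} (hg : Measurable g) : (P.prod Q).map (g ∘ Prod.fst) = P.map g := by
  rw [← Measure.map_map hg measurable_fst, measurePreserving_fst.map_eq]

variable {Φ : Set (∀ k, Λ k)} {μ : (∀ k, Λ k) → Measure (∀ k, S k)}

theorem SelectiveInfluences.hasCommonAndSpecificSources (h : SelectiveInfluences.{w} Φ μ) :
    HasCommonAndSpecificSources.{w} Φ μ := by
  obtain ⟨Ω, _, P, hP, f, hf, hmap⟩ := h
  refine ⟨Ω, inferInstance, P, hP, fun _ => PUnit, inferInstance,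
    fun _ => Measure.dirac PUnit.unit, inferInstance,
    fun k l q => f k l q.1, fun k l => (hf k l).comp measurable_fst, fun φ hφ => ?_⟩
  have houtputs : Measurable fun ω k => f k (φ k) ω := measurable_pi_lambda _ fun k => hf k (φ k)
  exact (map_comp_fst_prod P _ houtputs).trans (hmap φ hφ)

theorem HasCommonAndSpecificSources.selectiveInfluences
    (h : HasCommonAndSpecificSources.{w} Φ μ) : SelectiveInfluences.{max t w} Φ μ := by
  obtain ⟨Ω₀, _, P₀, hP₀, Ωs, _, Ps, hPs, w, hw, hmap⟩ := h
  have hsources (k : ι) : Measurable fun q : Ω₀ × (∀ k, Ωs k) => (q.1, q.2 k) := by fun_prop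
  exact ⟨Ω₀ × (∀ k, Ωs k), inferInstance, P₀.prod (Measure.infinitePi Ps), inferInstance,
    fun k l q => w k l (q.1, q.2 k), fun k l => (hw k l).comp (hsources k), hmap⟩

variable (Φ μ) in
theorem selective_influences_iff_common_and_specific_sources_general :
    SelectiveInfluences.{max t w} Φ μ ↔ HasCommonAndSpecificSources.{max t w} Φ μ :=
  ⟨SelectiveInfluences.hasCommonAndSpecificSources,
    HasCommonAndSpecificSources.selectiveInfluences⟩

end

/-- Common and specific sources of variability. A family
`(μ φ)_{φ ∈ Φ}` of joint output distributions satisfies selective influences if and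
only if there exist a probability space `Ω₀` (common source of variability),
stochastically independent probability spaces `Ω₁,…,Ωₙ` (sources specific to the
respective outputs) and functions `w k : Λ k × Ω₀ × Ω k → S k`, jointly measurable in
the last two arguments for every fixed input value, such that for every allowable
treatment `φ = (λ₁,…,λₙ)` the pushforward of the product measure `P₀ ⊗ P₁ ⊗ ⋯ ⊗ Pₙ`
under `(ω₀,ω₁,…,ωₙ) ↦ (w₁(λ₁,ω₀,ω₁),…,wₙ(λₙ,ω₀,ωₙ))` equals `μ φ`. -/
theorem selective_influences_iff_common_and_specific_sources
    {n : ℕ} (Λ : Fin n → Type u) [∀ k, Nonempty (Λ k)]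
    (S : Fin n → Type v) [∀ k, MeasurableSpace (S k)]
    (Φ : Set (∀ k, Λ k)) (hΦ : Φ.Nonempty)
    (μ : (∀ k, Λ k) → Measure (∀ k, S k))
    (hμ : ∀ φ ∈ Φ, IsProbabilityMeasure (μ φ)) :
    (∃ (Ω : Type (max u v)) (_ : MeasurableSpace Ω) (P : Measure Ω),
      IsProbabilityMeasure P ∧
      ∃ f : ∀ k, Λ k → Ω → S k,
        (∀ k lam, Measurable (f k lam)) ∧
        ∀ φ ∈ Φ, Measure.map (fun ω k => f k (φ k) ω) P = μ φ)
    ↔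
    (∃ (Ω₀ : Type (max u v)) (_ : MeasurableSpace Ω₀) (P₀ : Measure Ω₀),
      IsProbabilityMeasure P₀ ∧
      ∃ (Ωs : Fin n → Type (max u v)) (_ : ∀ k, MeasurableSpace (Ωs k))
        (Ps : ∀ k, Measure (Ωs k)),
        (∀ k, IsProbabilityMeasure (Ps k)) ∧
        ∃ w : ∀ k, Λ k → Ω₀ × Ωs k → S k,
          (∀ k lam, Measurable (w k lam)) ∧
          ∀ φ ∈ Φ,
            Measure.map
              (fun q : Ω₀ × (∀ k, Ωs k) => fun k => w k (φ k) (q.1, q.2 k))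
              (P₀.prod (Measure.pi Ps)) = μ φ) := by
  simpa only [SelectiveInfluences, HasCommonAndSpecificSources, Measure.infinitePi_eq_pi,
    exists_prop] using selective_influences_iff_common_and_specific_sources_general Φ μ
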